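/- (Theorem 2: uniform asymptotic coverage of the projection confidence interval.) Under Assumptions 1, 3, 4 and 5 of the framework described in the context, for any random index d̂ with values in {0,…,T} (depending arbitrarily on the data) and all 0 < α₁, α₂ < 1/2: liminf_{n→∞} inf_{P ∈ P_n} P( [L_{p(P)}(d̂), U_{p(P)}(d̂)] ⊆ ( n^{−1/2}·L̂^P_{α₁}(d̂), n^{−1/2}·Û^P_{1−α₂}(d̂) ) ) ≥ 1 − α₁ − α₂, where [a,b] ⊆ (x,y) means x < a and b < y. -/

import Mathlib

/-!
The selected rows obey a deterministic comparison: since `ĵ_L(d)` attains the maximum at `p̂` and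
`L_p(d)` dominates each of its affine pieces, non-coverage from below forces
`ℓ_{d,ĵ} · √n (p̂ - p) ≥ √((Σ̂_L)_{(d,ĵ),(d,ĵ)}) ĉ` for `(d, ĵ) = (d̂, ĵ_L(d̂))`. Hence,
whatever the selection rule, it suffices to bound the probability that *some* row violates its
threshold by `α₁ + o(1)`; the upper bound is the same problem for the rows `-u`
(`one_sided_error`), and a union bound concludes.

For one side, write `V` for the matrix of rows, `A = Σ(P)` and `B` for a value of `Σ̂`.

* On the event where `Σ̂` is close to `A`, one has `(1 - δ) A ≤ B ≤ (1 + δ) A` as quadratic forms,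
  by the eigenvalue bounds. The noise covariance `R = (1 + δ) A - B` is then positive semidefinite
  and small, and `N(0, V B Vᵀ)` plus independent `V · N(0, R)` is distributed as
  `√(1 + δ) V · N(0, A)` (`gaussian_coupling`, by Cramér–Wold). With Chebyshev's inequality for the
  noise and the fact that a standardized Gaussian coordinate has density at most one, this shows
  that the critical value computed from `B` is almost valid for `N(0, A)`
  (`gaussian_tail_transfer`).
* The critical value is random, but `α < 1/2` and Chebyshev's inequality put it in a fixed interval
  `[0, C]` on the good event (`critical_value_bounds`). Its infimum `t` over the good event is a
  deterministic threshold below all critical values, and it is nearly attained at one outcome `ω₀`,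
  to which the preceding step applies.
* A Lipschitz cut-off transfers tail probabilities of the Lipschitz statistic
  `max_i (v_i · x) / σ_i` from `√n (p̂ - p)` to the Gaussian limit (`tail_le_of_BL1`).

No measurability of the statistics is needed: probabilities of the bad events are bounded as outer
measures.
-/

open MeasureTheory ProbabilityTheory Finset
open scoped NNReal ENNReal

noncomputable section

/-- The class `BL₁` of real functions on `ℝ^k` bounded in absolute value by one with
Lipschitz constant at most one. -/
def BL1 (k : ℕ) : Set ((Fin k → ℝ) → ℝ) :=
  {f | (∀ x, |f x| ≤ 1) ∧ LipschitzWith 1 f}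

/-- A probability measure `ν` on a finite-dimensional coordinate space is centered
Gaussian with covariance matrix `S` iff every linear functional pushes it forward to the
corresponding one-dimensional centered Gaussian. -/
def IsCenteredGaussian {ι : Type} [Fintype ι] (S : Matrix ι ι ℝ)
    (ν : Measure (ι → ℝ)) : Prop :=
  IsProbabilityMeasure ν ∧
    ∀ l : ι → ℝ,
      ν.map (fun x => ∑ i, l i * x i)
        = gaussianReal 0 (Real.toNNReal (∑ i, ∑ j, l i * S i j * l j))

/-- The data of the general inference framework needed for the projection confidence
interval (Assumption 1 and the statistics). -/
structure Setup (Ω : Type) [MeasurableSpace Ω] where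
  k : ℕ
  T : ℕ
  JL : ℕ
  JU : ℕ
  hJL : NeZero JL
  hJU : NeZero JU
  ltil : Fin (T + 1) → Fin JL → ℝ
  lvec : Fin (T + 1) → Fin JL → Fin k → ℝ
  util : Fin (T + 1) → Fin JU → ℝ
  uvec : Fin (T + 1) → Fin JU → Fin k → ℝ
  lvec_ne : ∀ d j, lvec d j ≠ 0
  uvec_ne : ∀ d j, uvec d j ≠ 0
  lvec_inj : ∀ d, Function.Injective (lvec d)
  uvec_inj : ∀ d, Function.Injective (uvec d)
  phat : ℕ → Ω → Fin k → ℝ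
  Sig : ℕ → Ω → Matrix (Fin k) (Fin k) ℝ
  Sig_symm : ∀ n ω, (Sig n ω).IsSymm
  jL : ℕ → Fin (T + 1) → Ω → Fin JL
  jU : ℕ → Fin (T + 1) → Ω → Fin JU
  jL_attains : ∀ n d ω j, ltil d j + ∑ i, lvec d j i * phat n ω i
    ≤ ltil d (jL n d ω) + ∑ i, lvec d (jL n d ω) i * phat n ω i
  jU_attains : ∀ n d ω j, util d (jU n d ω) + ∑ i, uvec d (jU n d ω) i * phat n ω i
    ≤ util d j + ∑ i, uvec d j i * phat n ω i
  Pfam : ℕ → Set (Measure Ω)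
  Pfam_prob : ∀ n P, P ∈ Pfam n → IsProbabilityMeasure P
  pmap : Measure Ω → Fin k → ℝ
  Smap : Measure Ω → Matrix (Fin k) (Fin k) ℝ

variable {Ω : Type} [MeasurableSpace Ω]

/-- Identified-set lower bound `L_p(d) = max_{1≤j≤J_L}(ℓ̃_{d,j} + ℓ_{d,j}p)`. -/
def Lb (S : Setup Ω) (p : Fin S.k → ℝ) (d : Fin (S.T + 1)) : ℝ :=
  haveI := S.hJL
  Finset.univ.sup' Finset.univ_nonempty (fun j => S.ltil d j + ∑ i, S.lvec d j i * p i)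

/-- Identified-set upper bound `U_p(d) = min_{1≤j≤J_U}(ũ_{d,j} + u_{d,j}p)`. -/
def Ub (S : Setup Ω) (p : Fin S.k → ℝ) (d : Fin (S.T + 1)) : ℝ :=
  haveI := S.hJU
  Finset.univ.inf' Finset.univ_nonempty (fun j => S.util d j + ∑ i, S.uvec d j i * p i)

/-- `Σ̂_L = ℓ^mat Σ̂ ℓ^mat′`, with rows of `ℓ^mat` indexed by pairs `(d,j)`. -/
def SigL (S : Setup Ω) (n : ℕ) (ω : Ω) :
    Matrix (Fin (S.T + 1) × Fin S.JL) (Fin (S.T + 1) × Fin S.JL) ℝ :=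
  fun a b => ∑ s, ∑ t, S.lvec a.1 a.2 s * S.Sig n ω s t * S.lvec b.1 b.2 t

/-- `Σ̂_U = u^mat Σ̂ u^mat′`, with rows of `u^mat` indexed by pairs `(d,j)`. -/
def SigU (S : Setup Ω) (n : ℕ) (ω : Ω) :
    Matrix (Fin (S.T + 1) × Fin S.JU) (Fin (S.T + 1) × Fin S.JU) ℝ :=
  fun a b => ∑ s, ∑ t, S.uvec a.1 a.2 s * S.Sig n ω s t * S.uvec b.1 b.2 t

/-- The max-statistic `max_i x_i / √(M_{ii})` used to define the simultaneous critical
values. -/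
def MaxStat {ι : Type} [Fintype ι] [Nonempty ι] (M : Matrix ι ι ℝ) (x : ι → ℝ) : ℝ :=
  Finset.univ.sup' Finset.univ_nonempty (fun a => x a / Real.sqrt (M a a))

/-- Assumption 3: uniform asymptotic normality of `√n(p̂ − p(P))` over `P ∈ 𝒫_n` in
bounded-Lipschitz distance, with Gaussian limit `N(0, Σ(P))`. -/
def A3 (S : Setup Ω) : Prop :=
  ∃ xi : Measure Ω → Measure (Fin S.k → ℝ),
    (∀ n P, P ∈ S.Pfam n → IsCenteredGaussian (S.Smap P) (xi P)) ∧
    ∀ ε > (0 : ℝ), ∃ N, ∀ n ≥ N, ∀ P ∈ S.Pfam n, ∀ f ∈ BL1 S.k,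
      |(∫ ω, f (fun i => Real.sqrt n * (S.phat n ω i - S.pmap P i)) ∂P)
          - ∫ x, f x ∂(xi P)| ≤ ε

/-- Assumption 4: uniform consistency of `Σ̂` for `Σ(P)`. -/
def A4 (S : Setup Ω) : Prop :=
  ∀ ε > (0 : ℝ), ∀ δ > (0 : ℝ), ∃ N, ∀ n ≥ N, ∀ P ∈ S.Pfam n,
    (P {ω | ∃ i j, ε < |S.Sig n ω i j - S.Smap P i j|}).toReal ≤ δ

/-- Assumption 5: eigenvalues of `Σ(P)` bounded above and away from zero, uniformly. -/
def A5 (S : Setup Ω) : Prop :=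
  ∃ lam : ℝ, 0 < lam ∧ ∀ n P, P ∈ S.Pfam n → ∀ x : Fin S.k → ℝ,
    (1 / lam) * (∑ i, x i ^ 2) ≤ (∑ i, ∑ j, x i * S.Smap P i j * x j)
      ∧ (∑ i, ∑ j, x i * S.Smap P i j * x j) ≤ lam * ∑ i, x i ^ 2

/-! ### Quadratic forms and centered Gaussian vectors -/

/-- The quadratic form `x ↦ xᵀ A x` of a square matrix. -/
def quadForm {ι : Type} [Fintype ι] (A : Matrix ι ι ℝ) (x : ι → ℝ) : ℝ :=
  ∑ i, ∑ j, x i * A i j * x j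

lemma quadForm_eq_dotProduct {ι : Type} [Fintype ι] (A : Matrix ι ι ℝ) (x : ι → ℝ) :
    quadForm A x = x ⬝ᵥ A.mulVec x := by
  simp only [quadForm, dotProduct, Matrix.mulVec, Finset.mul_sum, mul_assoc]

lemma exists_isCenteredGaussian {ι : Type} [Fintype ι] {R : Matrix ι ι ℝ}
    (hR : R.PosSemidef) : ∃ ρ : Measure (ι → ℝ), IsCenteredGaussian R ρ := by
  classical
  refine ⟨(multivariateGaussian 0 R).map (WithLp.ofLp), ?_, fun l => ?_⟩
  · exact Measure.isProbabilityMeasure_map (by fun_prop)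
  · rw [Measure.map_map (by fun_prop) (by fun_prop)]
    have : IsProbabilityMeasure ((multivariateGaussian 0 R).map
        ((fun x : ι → ℝ => ∑ i, l i * x i) ∘ WithLp.ofLp)) :=
      Measure.isProbabilityMeasure_map (by fun_prop)
    apply Measure.ext_of_charFun
    ext t
    have hq : 0 ≤ quadForm R l := by
      rw [quadForm_eq_dotProduct]
      simpa using hR.dotProduct_mulVec_nonneg l
    have h1 : charFun ((multivariateGaussian 0 R).map
        ((fun x : ι → ℝ => ∑ i, l i * x i) ∘ WithLp.ofLp)) t
        = charFun (multivariateGaussian 0 R) (WithLp.toLp 2 (t • l)) := by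
      rw [charFun_apply, charFun_apply, integral_map (by fun_prop) (by fun_prop)]
      congr 1
      ext x
      simp [PiLp.inner_apply, Finset.mul_sum, mul_assoc]
    rw [h1, charFun_multivariateGaussian hR, charFun_gaussianReal]
    have h2 : (∑ i, ∑ j, l i * R i j * l j) = quadForm R l := rfl
    rw [h2, Real.coe_toNNReal _ hq, quadForm_eq_dotProduct]
    congr 1
    simp [Matrix.mulVec_smul]
    ring

/-- Cramér–Wold: a finite measure on `ℝ^ι` is determined by its one-dimensional projections. -/
lemma measure_ext_of_map_linear {ι : Type} [Fintype ι] {μ ν : Measure (ι → ℝ)}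
    [IsFiniteMeasure μ] [IsFiniteMeasure ν]
    (h : ∀ l : ι → ℝ, μ.map (fun x => ∑ i, l i * x i) = ν.map (fun x => ∑ i, l i * x i)) :
    μ = ν := by
  classical
  apply Measure.ext_of_charFunDual
  ext L
  rw [charFunDual_eq_charFun_map_one, charFunDual_eq_charFun_map_one]
  have hL : (L : (ι → ℝ) → ℝ) = fun x => ∑ i, L (Pi.single i 1) * x i := by
    ext x
    conv_lhs => rw [pi_eq_sum_univ' x]
    simp [mul_comm]
  rw [hL, h]

/-- The covariance matrix of the image of `N(0, B)` under the linear map with rows `v`. -/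
def pushCov {ι κ : Type} [Fintype κ] (v : ι → κ → ℝ) (B : Matrix κ κ ℝ) : Matrix ι ι ℝ :=
  fun a b => ∑ s, ∑ t, v a s * B s t * v b t

lemma quadForm_pushCov {ι κ : Type} [Fintype ι] [Fintype κ] (v : ι → κ → ℝ)
    (B : Matrix κ κ ℝ) (l : ι → ℝ) :
    quadForm (pushCov v B) l = quadForm B (fun s => ∑ i, l i * v i s) := by
  have h : pushCov v B = Matrix.of v * B * (Matrix.of v).transpose := by
    ext a b
    simp only [pushCov, Matrix.mul_apply, Matrix.of_apply, Matrix.transpose_apply,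
      Finset.sum_mul]
    exact Finset.sum_comm
  have h2 : (fun s => ∑ i, l i * v i s) = (Matrix.of v).transpose.mulVec l := by
    ext s
    simp [Matrix.mulVec, dotProduct, mul_comm]
  rw [quadForm_eq_dotProduct, quadForm_eq_dotProduct, h, h2, Matrix.mulVec_mulVec,
    Matrix.dotProduct_mulVec, Matrix.dotProduct_mulVec, Matrix.mulVec_transpose,
    Matrix.vecMul_vecMul, ← Matrix.mul_assoc]


/-! ### Tails and anti-concentration of Gaussian coordinates -/

/-- Chebyshev's inequality for a linear functional of a centered Gaussian vector. -/
lemma IsCenteredGaussian.tail_le {ι : Type} [Fintype ι] {A : Matrix ι ι ℝ}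
    {ν : Measure (ι → ℝ)} (h : IsCenteredGaussian A ν) (l : ι → ℝ)
    (hl : 0 ≤ quadForm A l) {η : ℝ} (hη : 0 < η) :
    ν.real {x | η < ∑ i, l i * x i} ≤ quadForm A l / η ^ 2 := by
  have hm : ν.map (fun x => ∑ i, l i * x i) = gaussianReal 0 (quadForm A l).toNNReal := h.2 l
  have h1 := meas_ge_le_variance_div_sq (μ := gaussianReal 0 (quadForm A l).toNNReal)
    (X := id) (memLp_id_gaussianReal 2) hη
  rw [variance_id_gaussianReal, Real.coe_toNNReal _ hl] at h1
  have h2 : ν {x | η < ∑ i, l i * x i}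
      ≤ (gaussianReal 0 (quadForm A l).toNNReal) {y | η ≤ |y|} := by
    rw [← hm, Measure.map_apply (by fun_prop) (measurableSet_le (by fun_prop) (by fun_prop))]
    exact measure_mono fun x (hx : η < _) => show η ≤ |_| from hx.le.trans (le_abs_self _)
  refine ENNReal.toReal_le_of_le_ofReal (by positivity) (h2.trans ?_)
  simpa using h1

lemma gaussianReal_Icc_le {a b : ℝ} {v : ℝ≥0} (hv : v = 1) (hab : a ≤ b) :
    (gaussianReal 0 v).real (Set.Icc a b) ≤ b - a := by
  subst hv
  refine ENNReal.toReal_le_of_le_ofReal (by linarith) ?_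
  rw [gaussianReal_apply _ one_ne_zero, ← Real.volume_Icc]
  calc ∫⁻ x in Set.Icc a b, gaussianPDF 0 1 x ≤ ∫⁻ x in Set.Icc a b, 1 := by
        refine lintegral_mono fun x => ?_
        rw [gaussianPDF, ENNReal.ofReal_le_one, gaussianPDFReal]
        have h1 : (√(2 * Real.pi * ((1 : ℝ≥0) : ℝ)))⁻¹ ≤ 1 := by
          apply inv_le_one_of_one_le₀
          rw [Real.one_le_sqrt]
          have := Real.pi_gt_three
          push_cast; linarith
        have h2 : Real.exp (-(x - 0) ^ 2 / (2 * ((1 : ℝ≥0) : ℝ))) ≤ 1 := by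
          rw [Real.exp_le_one_iff]
          have := sq_nonneg (x - 0)
          push_cast
          linarith
        exact mul_le_one₀ h1 (Real.exp_pos _).le h2
    _ = volume (Set.Icc a b) := by simp

/-- Anti-concentration: a standardized Gaussian coordinate has density at most one. -/
lemma IsCenteredGaussian.Icc_le {ι : Type} [Fintype ι] {A : Matrix ι ι ℝ}
    {ν : Measure (ι → ℝ)} (h : IsCenteredGaussian A ν) (l : ι → ℝ)
    (hl : 0 < quadForm A l) {a b : ℝ} (hab : a ≤ b) :
    ν.real {x | a * √(quadForm A l) ≤ ∑ i, l i * x i ∧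
      ∑ i, l i * x i ≤ b * √(quadForm A l)} ≤ b - a := by
  have hm : ν.map (fun x => ∑ i, l i * x i) = gaussianReal 0 (quadForm A l).toNNReal := h.2 l
  have hs : 0 < √(quadForm A l) := Real.sqrt_pos.2 hl
  have hm2 : ν.map (fun x => (∑ i, l i * x i) / √(quadForm A l)) = gaussianReal 0 1 := by
    have : (fun x : ι → ℝ => (∑ i, l i * x i) / √(quadForm A l))
      = (fun y => y / √(quadForm A l)) ∘ (fun x => ∑ i, l i * x i) := rfl
    rw [this, ← Measure.map_map (by fun_prop) (by fun_prop), hm, gaussianReal_map_div_const]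
    congr 1
    · simp
    · ext
      simp [Real.sq_sqrt hl.le, Real.coe_toNNReal _ hl.le, hl.ne']
  have h1 := gaussianReal_Icc_le rfl hab
  rw [← hm2, map_measureReal_apply (by fun_prop) measurableSet_Icc] at h1
  convert h1 using 2
  ext x
  simp [le_div_iff₀ hs, div_le_iff₀ hs]

/-- A centered Gaussian coordinate is negative with probability at most one half. -/
lemma IsCenteredGaussian.neg_le_half {ι : Type} [Fintype ι] {A : Matrix ι ι ℝ}
    {ν : Measure (ι → ℝ)} (h : IsCenteredGaussian A ν) (l : ι → ℝ) :
    ν.real {x | ∑ i, l i * x i < 0} ≤ 1 / 2 := by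
  have hm : ν.map (fun x => ∑ i, l i * x i) = gaussianReal 0 (quadForm A l).toNNReal := h.2 l
  have hset : {x : ι → ℝ | ∑ i, l i * x i < 0} = (fun x => ∑ i, l i * x i) ⁻¹' Set.Iio 0 := rfl
  rw [hset, ← map_measureReal_apply (by fun_prop) measurableSet_Iio, hm]
  set γ := gaussianReal 0 (quadForm A l).toNNReal
  have h1 : γ.real (Set.Ioi 0) = γ.real (Set.Iio 0) := by
    have : γ.map (fun x => -x) = γ := by simp [γ, gaussianReal_map_neg]
    conv_lhs => rw [← this]
    rw [map_measureReal_apply (by fun_prop) measurableSet_Ioi]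
    congr 1
    ext x; simp
  have h2 : γ.real (Set.Iio 0 ∪ Set.Ioi 0) = γ.real (Set.Iio 0) + γ.real (Set.Ioi 0) :=
    measureReal_union (Set.disjoint_left.2 fun x (hx : x < 0) (hx' : 0 < x) => lt_asymm hx hx') measurableSet_Ioi
  have h3 : γ.real (Set.Iio 0 ∪ Set.Ioi 0) ≤ 1 := measureReal_le_one
  linarith

/-- The critical value at level `1 - α < 1`, `α < 1/2`, of the maximum of standardized centered
Gaussian coordinates is nonnegative, because a single negative coordinate has probability at most
`1/2`, and is bounded by Chebyshev's inequality. -/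
lemma critical_value_bounds {ι : Type} [Fintype ι] [Nonempty ι] {M : Matrix ι ι ℝ}
    (hM : ∀ i, 0 < M i i) {ν : Measure (ι → ℝ)} (hν : IsCenteredGaussian M ν)
    {α : ℝ} (hα : 0 < α) (hα' : α < 1 / 2) {c : ℝ}
    (hc : c = sInf {t : ℝ | 1 - α ≤ (ν {x | MaxStat M x ≤ t}).toReal}) :
    0 ≤ c ∧ c ≤ √(Fintype.card ι / α) ∧
      ∀ t > c, ν.real {x | ∃ i, t * √(M i i) < x i} ≤ α := by
  classical
  have := hν.1
  have hq : ∀ i, quadForm M (Pi.single i 1) = M i i := by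
    intro i; simp [quadForm, Pi.single_apply]
  have hs : ∀ i (x : ι → ℝ), ∑ j, (Pi.single i 1 : ι → ℝ) j * x j = x i := by
    intro i x; simp [Pi.single_apply]
  have hcompl : ∀ t, {x : ι → ℝ | MaxStat M x ≤ t} = {x | ∃ i, t * √(M i i) < x i}ᶜ := by
    intro t
    ext x
    simp [MaxStat, Finset.sup'_le_iff, div_le_iff₀ (Real.sqrt_pos.2 (hM _))]
  have hmeas : ∀ t, MeasurableSet {x : ι → ℝ | ∃ i, t * √(M i i) < x i} := by
    intro t
    rw [Set.ofPred_exists]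
    exact MeasurableSet.iUnion fun i => measurableSet_lt (by fun_prop) (by fun_prop)
  have hprob : ∀ t, (ν {x | MaxStat M x ≤ t}).toReal
      = 1 - ν.real {x | ∃ i, t * √(M i i) < x i} := by
    intro t
    rw [hcompl, ← probReal_compl_eq_one_sub (hmeas t)]
    rfl
  have hnonneg : ∀ t ∈ {t : ℝ | 1 - α ≤ (ν {x | MaxStat M x ≤ t}).toReal}, 0 ≤ t := by
    intro t ht
    by_contra hneg
    push Not at hneg
    obtain ⟨i⟩ := ‹Nonempty ι›
    have h1 := hν.neg_le_half (Pi.single i 1)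
    have h2 : (ν {x | MaxStat M x ≤ t}).toReal
        ≤ ν.real {x | ∑ j, (Pi.single i 1 : ι → ℝ) j * x j < 0} := by
      refine measureReal_mono fun x hx => ?_
      rw [hcompl] at hx
      simp only [Set.mem_compl_iff, Set.mem_ofPred_eq, not_exists, not_lt] at hx
      rw [Set.mem_ofPred_eq, hs]
      exact (hx i).trans_lt (mul_neg_of_neg_of_pos hneg (Real.sqrt_pos.2 (hM i)))
    have h3 : 1 - α ≤ (ν {x | MaxStat M x ≤ t}).toReal := ht
    linarith
  have hcard : (0 : ℝ) < Fintype.card ι := by exact_mod_cast Fintype.card_pos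
  set C := √(Fintype.card ι / α) with hC
  have hCpos : 0 < C := Real.sqrt_pos.2 (by positivity)
  have hCmem : C ∈ {t : ℝ | 1 - α ≤ (ν {x | MaxStat M x ≤ t}).toReal} := by
    rw [Set.mem_ofPred_eq, hprob]
    have h1 : ν.real {x | ∃ i, C * √(M i i) < x i} ≤ ∑ i : ι, α / Fintype.card ι := by
      rw [Set.ofPred_exists]
      refine (measureReal_iUnion_fintype_le _).trans (Finset.sum_le_sum fun i _ => ?_)
      have h2 := hν.tail_le (Pi.single i 1) (by rw [hq]; exact (hM i).le)
        (mul_pos hCpos (Real.sqrt_pos.2 (hM i)))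
      simp only [hs, hq] at h2
      refine h2.trans (le_of_eq ?_)
      rw [mul_pow, Real.sq_sqrt (hM i).le, hC, Real.sq_sqrt (by positivity)]
      have := (hM i).ne'
      field_simp
    have h3 : ∑ i : ι, α / Fintype.card ι = α := by
      simp; field_simp
    linarith
  refine ⟨hc ▸ Real.sInf_nonneg hnonneg, hc ▸ csInf_le ⟨0, hnonneg⟩ hCmem, fun t ht => ?_⟩
  rw [hc, gt_iff_lt, csInf_lt_iff ⟨0, hnonneg⟩ ⟨C, hCmem⟩] at ht
  obtain ⟨t', ht', htt'⟩ := ht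
  rw [Set.mem_ofPred_eq, hprob] at ht'
  have : ν.real {x | ∃ i, t * √(M i i) < x i} ≤ ν.real {x | ∃ i, t' * √(M i i) < x i} := by
    refine measureReal_mono fun x ⟨i, hi⟩ => ⟨i, lt_of_le_of_lt ?_ hi⟩
    gcongr
  linarith

/-! ### Coupling of Gaussian vectors with nearby covariances -/

/-- If `s² A = B + R` as quadratic forms, then adding independent noise `V·N(0,R)` to
`N(0, V B Vᵀ)` gives the law of `s V·N(0,A)`. -/
lemma gaussian_coupling {ι κ : Type} [Fintype ι] [Fintype κ] (v : ι → κ → ℝ)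
    {A B R : Matrix κ κ ℝ} {ξ ρ : Measure (κ → ℝ)} {ν : Measure (ι → ℝ)}
    (hξ : IsCenteredGaussian A ξ) (hρ : IsCenteredGaussian R ρ)
    (hν : IsCenteredGaussian (pushCov v B) ν) (s : ℝ)
    (hA : ∀ x, 0 ≤ quadForm A x)
    (hB : ∀ x, 0 ≤ quadForm B x) (hR : ∀ x, 0 ≤ quadForm R x)
    (hsum : ∀ x, s ^ 2 * quadForm A x = quadForm B x + quadForm R x) :
    (ν.prod ρ).map (fun p i => p.1 i + ∑ j, v i j * p.2 j)
      = ξ.map (fun x i => s * ∑ j, v i j * x j) := by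
  have := hξ.1
  have := hρ.1
  have := hν.1
  have : IsProbabilityMeasure ((ν.prod ρ).map (fun p i => p.1 i + ∑ j, v i j * p.2 j)) :=
    Measure.isProbabilityMeasure_map (by fun_prop)
  have hmeas : Measurable (fun (x : κ → ℝ) (i : ι) => s * ∑ j, v i j * x j) :=
    measurable_pi_lambda _ fun i => by fun_prop
  have : IsProbabilityMeasure (ξ.map (fun x i => s * ∑ j, v i j * x j)) :=
    Measure.isProbabilityMeasure_map hmeas.aemeasurable
  apply measure_ext_of_map_linear
  intro l
  set w : κ → ℝ := fun t => ∑ i, l i * v i t with hw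
  have hswap : ∀ x : κ → ℝ, ∑ i, l i * ∑ j, v i j * x j = ∑ t, w t * x t := by
    intro x
    simp only [hw, Finset.mul_sum, Finset.sum_mul]
    rw [Finset.sum_comm]
    simp [mul_assoc]
  have hmν : ν.map (fun x => ∑ i, l i * x i) = gaussianReal 0 (quadForm B w).toNNReal := by
    rw [hw, ← quadForm_pushCov]; exact hν.2 l
  have hmρ : ρ.map (fun x => ∑ i, w i * x i) = gaussianReal 0 (quadForm R w).toNNReal := hρ.2 w
  have hmξ : ξ.map (fun x => ∑ i, w i * x i) = gaussianReal 0 (quadForm A w).toNNReal := hξ.2 w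
  rw [Measure.map_map (by fun_prop) (by fun_prop), Measure.map_map (by fun_prop) hmeas]
  have e1 : ((fun x : ι → ℝ => ∑ i, l i * x i) ∘
      fun (p : (ι → ℝ) × (κ → ℝ)) i => p.1 i + ∑ j, v i j * p.2 j)
      = (fun q : ℝ × ℝ => q.1 + q.2) ∘
        (Prod.map (fun x : ι → ℝ => ∑ i, l i * x i) (fun x : κ → ℝ => ∑ i, w i * x i)) := by
    ext p
    simp [mul_add, Finset.sum_add_distrib, hswap]
  have e2 : ((fun x : ι → ℝ => ∑ i, l i * x i) ∘
      fun (x : κ → ℝ) i => s * ∑ j, v i j * x j)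
      = (fun y => s * y) ∘ (fun x : κ → ℝ => ∑ i, w i * x i) := by
    ext x
    simp only [Function.comp_apply, ← hswap, Finset.mul_sum]
    simp only [mul_left_comm]
  rw [e1, e2, ← Measure.map_map (by fun_prop) (by fun_prop),
    ← Measure.map_map (by fun_prop) (by fun_prop),
    ← Measure.map_prod_map _ _ (by fun_prop) (by fun_prop), hmν, hmρ, hmξ,
    gaussianReal_map_const_mul]
  have e3 := gaussianReal_conv_gaussianReal (m₁ := 0) (m₂ := 0)
    (v₁ := (quadForm B w).toNNReal) (v₂ := (quadForm R w).toNNReal)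
  rw [Measure.conv] at e3
  rw [e3]
  congr 1
  · simp
  · ext
    simp [Real.coe_toNNReal _ (hA w), Real.coe_toNNReal _ (hB w), Real.coe_toNNReal _ (hR w),
      hsum]

lemma quadForm_sub_smul {κ : Type} [Fintype κ] (A B : Matrix κ κ ℝ) (r : ℝ) (x : κ → ℝ) :
    quadForm ((r / 2) • (A + A.transpose) - B) x = r * quadForm A x - quadForm B x := by
  have h : quadForm A.transpose x = quadForm A x := by
    rw [quadForm, quadForm, Finset.sum_comm]
    simp only [Matrix.transpose_apply]
    refine Finset.sum_congr rfl fun i _ => Finset.sum_congr rfl fun j _ => by ring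
  have h2 : r * quadForm A x = r / 2 * (quadForm A x + quadForm A.transpose x) := by
    rw [h]; ring
  rw [h2]
  simp only [quadForm, Matrix.sub_apply, Matrix.smul_apply, Matrix.add_apply, smul_eq_mul,
    Finset.mul_sum, ← Finset.sum_add_distrib, ← Finset.sum_sub_distrib]
  refine Finset.sum_congr rfl fun i _ => Finset.sum_congr rfl fun j _ => by ring

/-- Stability of tail probabilities under a small change of the covariance: if `B` is close to `A`
in the sense of quadratic forms, then `t = c + δ₁` exceeding the critical value for
`N(0, V B Vᵀ)` controls the probability that some standardized coordinate of `V·N(0, A)` exceeds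
the slightly smaller threshold `c - δ₂`. -/
lemma gaussian_tail_transfer {ι κ : Type} [Fintype ι] [Nonempty ι] [Fintype κ] (v : ι → κ → ℝ)
    {A B : Matrix κ κ ℝ} {ξ : Measure (κ → ℝ)} {ν : Measure (ι → ℝ)}
    (hξ : IsCenteredGaussian A ξ) (hν : IsCenteredGaussian (pushCov v B) ν)
    (hBsymm : B.IsSymm) {δ : ℝ} (hδ : 0 < δ) (hA : ∀ x, 0 ≤ quadForm A x)
    (hB : ∀ x, 0 ≤ quadForm B x)
    (hAB : ∀ x, (1 - δ) * quadForm A x ≤ quadForm B x)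
    (hBA : ∀ x, quadForm B x ≤ (1 + δ) * quadForm A x)
    {m b : ℝ} (hm : 0 < m) (hmA : ∀ i, m ≤ √(quadForm A (v i)))
    (hbA : ∀ i, quadForm A (v i) ≤ b)
    {α c δ₁ δ₂ η : ℝ} (hc : 0 ≤ c) (hδ₁ : 0 < δ₁) (hδ₂ : 0 < δ₂) (hη : 0 < η)
    (htail : ν.real {y | ∃ i, (c + δ₁) * √(pushCov v B i i) < y i} ≤ α) :
    ξ.real {x | ∃ i, (c - δ₂) * √(quadForm A (v i)) ≤ ∑ j, v i j * x j}
      ≤ α + Fintype.card ι * (2 * δ * b / η ^ 2) + Fintype.card ι * (δ₁ + δ₂ + η / m) := by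
  classical
  have := hξ.1
  have := hν.1
  set R : Matrix κ κ ℝ := ((1 + δ) / 2) • (A + A.transpose) - B with hRdef
  have hRq : ∀ x, quadForm R x = (1 + δ) * quadForm A x - quadForm B x :=
    quadForm_sub_smul A B (1 + δ)
  have hRnn : ∀ x, 0 ≤ quadForm R x := fun x => by rw [hRq]; linarith [hBA x]
  have hRpsd : R.PosSemidef := by
    refine Matrix.PosSemidef.of_dotProduct_mulVec_nonneg ?_ fun x => ?_
    · rw [Matrix.IsHermitian, Matrix.conjTranspose_eq_transpose_of_trivial, hRdef]
      simp [Matrix.transpose_sub, hBsymm.eq, add_comm]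
    · simpa [quadForm_eq_dotProduct] using hRnn x
  obtain ⟨ρ, hρ⟩ := exists_isCenteredGaussian hRpsd
  have := hρ.1
  set s := √(1 + δ) with hs
  have hs2 : s ^ 2 = 1 + δ := Real.sq_sqrt (by linarith)
  have hs1 : 1 ≤ s := Real.one_le_sqrt.2 (by linarith)
  have hcoup := gaussian_coupling v hξ hρ hν s hA hB hRnn
    (fun x => by rw [hs2, hRq]; ring)
  have hσ : ∀ i, 0 < √(quadForm A (v i)) := fun i => hm.trans_le (hmA i)
  set σ : ι → ℝ := fun i => √(quadForm A (v i)) with hσdef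
  have hσB : ∀ i, √(pushCov v B i i) ≤ s * σ i := by
    intro i
    rw [hs, hσdef, ← Real.sqrt_mul (by linarith)]
    exact Real.sqrt_le_sqrt (hBA (v i))
  -- The coupled vector exceeds the enlarged thresholds with probability at most `α` plus noise.
  set E : Set (ι → ℝ) := {y | ∃ i, (c + δ₁) * √(pushCov v B i i) + η < y i} with hE
  have hEm : MeasurableSet E := by
    rw [hE, Set.ofPred_exists]
    exact MeasurableSet.iUnion fun i => measurableSet_lt (by fun_prop) (by fun_prop)
  have hmeas : Measurable (fun (x : κ → ℝ) (i : ι) => s * ∑ j, v i j * x j) :=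
    measurable_pi_lambda _ fun i => by fun_prop
  have h1 : ξ.real ((fun x i => s * ∑ j, v i j * x j) ⁻¹' E)
      ≤ α + Fintype.card ι * (2 * δ * b / η ^ 2) := by
    rw [← map_measureReal_apply hmeas hEm, ← hcoup,
      map_measureReal_apply (by fun_prop) hEm]
    have hsub : (fun (p : (ι → ℝ) × (κ → ℝ)) i => p.1 i + ∑ j, v i j * p.2 j) ⁻¹' E
        ⊆ (Prod.fst ⁻¹' {y | ∃ i, (c + δ₁) * √(pushCov v B i i) < y i})
          ∪ ⋃ i, Prod.snd ⁻¹' {x | η < ∑ j, v i j * x j} := by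
      rintro p ⟨i, hi⟩
      by_cases hp : η < ∑ j, v i j * p.2 j
      · exact Or.inr (Set.mem_iUnion.2 ⟨i, hp⟩)
      · refine Or.inl ⟨i, ?_⟩
        push Not at hp
        simp only at hi ⊢
        linarith
    refine (measureReal_mono hsub).trans ((measureReal_union_le _ _).trans ?_)
    refine add_le_add ?_ ?_
    · rw [measureReal_def, measurePreserving_fst.measure_preimage]
      · exact htail
      · rw [Set.ofPred_exists]
        exact (MeasurableSet.iUnion fun i =>
          measurableSet_lt (by fun_prop) (by fun_prop)).nullMeasurableSet
    · refine (measureReal_iUnion_fintype_le _).trans ?_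
      refine (Finset.sum_le_card_nsmul _ _ (2 * δ * b / η ^ 2) fun i _ => ?_).trans
        (le_of_eq (by rw [Finset.card_univ, nsmul_eq_mul]))
      rw [measureReal_def, measurePreserving_snd.measure_preimage
        (measurableSet_lt (by fun_prop) (by fun_prop)).nullMeasurableSet]
      refine (hρ.tail_le (v i) (hRnn _) hη).trans ?_
      gcongr
      rw [hRq]
      nlinarith [hAB (v i), hbA i]
  -- The remaining event confines some standardized coordinate to a short interval.
  have hsub2 : {x : κ → ℝ | ∃ i, (c - δ₂) * σ i ≤ ∑ j, v i j * x j}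
      ⊆ ((fun x i => s * ∑ j, v i j * x j) ⁻¹' E) ∪
        ⋃ i, {x | (c - δ₂) * σ i ≤ ∑ j, v i j * x j ∧
          ∑ j, v i j * x j ≤ (c + δ₁ + η / m) * σ i} := by
    rintro x ⟨i, hi⟩
    by_cases hx : (c + δ₁) * √(pushCov v B i i) + η < s * ∑ j, v i j * x j
    · exact Or.inl ⟨i, hx⟩
    · refine Or.inr (Set.mem_iUnion.2 ⟨i, hi, ?_⟩)
      push Not at hx
      have e1 : (c + δ₁) * √(pushCov v B i i) ≤ (c + δ₁) * (s * σ i) :=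
        mul_le_mul_of_nonneg_left (hσB i) (by linarith)
      have e2 : η ≤ η / m * σ i := by
        rw [div_mul_eq_mul_div, le_div_iff₀ hm]
        exact mul_le_mul_of_nonneg_left (hmA i) hη.le
      have e3 : η / m * σ i ≤ s * (η / m * σ i) :=
        le_mul_of_one_le_left (by have := hσ i; positivity) hs1
      refine le_of_mul_le_mul_left (a := s) ?_ (by linarith)
      nlinarith
  refine (measureReal_mono hsub2).trans ((measureReal_union_le _ _).trans (add_le_add h1 ?_))
  refine (measureReal_iUnion_fintype_le _).trans ?_
  refine (Finset.sum_le_card_nsmul _ _ (δ₁ + δ₂ + η / m) fun i _ => ?_).trans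
    (le_of_eq (by rw [Finset.card_univ, nsmul_eq_mul]))
  have hlen : c - δ₂ ≤ c + δ₁ + η / m := by
    have : 0 < η / m := by positivity
    linarith
  refine (hξ.Icc_le (v i) (Real.sqrt_pos.1 (hσ i)) hlen).trans (le_of_eq (by ring))

/-! ### From bounded-Lipschitz distance to tail probabilities -/

/-- Passing from the bounded-Lipschitz distance to tail probabilities of a Lipschitz statistic.
Measurability of `X` is not assumed: a non-measurable `f ∘ X` would have Bochner integral zero,
which is incompatible with the hypothesis for a test function `f ≥ 1/2`. -/
lemma tail_le_of_BL1 {k : ℕ} {P : Measure Ω} [IsProbabilityMeasure P]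
    {ξ : Measure (Fin k → ℝ)} [IsProbabilityMeasure ξ] {X : Ω → Fin k → ℝ} {ε : ℝ}
    (hε : ε < 1 / 2)
    (h : ∀ f ∈ BL1 k, |(∫ ω, f (X ω) ∂P) - ∫ x, f x ∂ξ| ≤ ε)
    {M : (Fin k → ℝ) → ℝ} {L δ K : ℝ} (hM : ∀ x y, M x ≤ M y + L * dist x y)
    (hδ : 0 < δ) (hK : 1 ≤ K) (hLK : L / δ ≤ K) (a : ℝ) :
    P.real {ω | a ≤ M (X ω)} ≤ ξ.real {x | a - δ ≤ M x} + K * ε := by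
  have hK0 : 0 < K := by linarith
  set ψ : ℝ → ℝ := fun t => min 1 (max 0 t) with hψ
  have hψ0 : ∀ t, 0 ≤ ψ t := fun t => le_min zero_le_one (le_max_left _ _)
  have hψ1 : ∀ t, ψ t ≤ 1 := fun t => min_le_left _ _
  have hψL : ∀ s t, |ψ s - ψ t| ≤ |s - t| := by
    intro s t
    have : LipschitzWith 1 ψ := (LipschitzWith.id.const_max 0).const_min 1
    simpa [Real.dist_eq] using this.dist_le_mul s t
  set g : (Fin k → ℝ) → ℝ := fun x => K⁻¹ * ψ ((M x - (a - δ)) / δ) with hg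
  have hg0 : ∀ x, 0 ≤ g x := fun x => mul_nonneg (by positivity) (hψ0 _)
  have hg1 : ∀ x, g x ≤ 1 := fun x => mul_le_one₀ (inv_le_one_of_one_le₀ hK) (hψ0 _) (hψ1 _)
  have hML : ∀ x y, |M x - M y| ≤ L * dist x y := fun x y =>
    abs_sub_le_iff.2 ⟨by linarith [hM x y], by have := hM y x; rw [dist_comm] at this; linarith⟩
  have hgL : ∀ x y, |g x - g y| ≤ dist x y := by
    intro x y
    calc |g x - g y| = K⁻¹ * |ψ ((M x - (a - δ)) / δ) - ψ ((M y - (a - δ)) / δ)| := by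
          rw [hg, ← mul_sub, abs_mul, abs_of_pos (inv_pos.2 hK0)]
      _ ≤ K⁻¹ * |(M x - (a - δ)) / δ - (M y - (a - δ)) / δ| := by
          exact mul_le_mul_of_nonneg_left (hψL _ _) (inv_pos.2 hK0).le
      _ = K⁻¹ * (|M x - M y| / δ) := by
          rw [← sub_div, abs_div, abs_of_pos hδ]; congr 3; ring
      _ ≤ K⁻¹ * (L * dist x y / δ) := by gcongr; exact hML x y
      _ = K⁻¹ * (L / δ) * dist x y := by ring
      _ ≤ K⁻¹ * K * dist x y := by gcongr
      _ = dist x y := by rw [inv_mul_cancel₀ hK0.ne', one_mul]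
  have hgBL : g ∈ BL1 k := ⟨fun x => abs_le.2 ⟨by linarith [hg0 x], hg1 x⟩,
    LipschitzWith.of_dist_le_mul fun x y => by simpa [Real.dist_eq] using hgL x y⟩
  have hg' : (fun x => (1 + g x) / 2) ∈ BL1 k :=
    ⟨fun x => abs_le.2 ⟨by linarith [hg0 x], by linarith [hg1 x]⟩,
      LipschitzWith.of_dist_le_mul fun x y => by
        have h1 := hgL x y
        have h2 : (1 + g x) / 2 - (1 + g y) / 2 = (g x - g y) / 2 := by ring
        rw [Real.dist_eq, h2, abs_div, abs_two]
        have := abs_nonneg (g x - g y)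
        simp only [NNReal.coe_one, one_mul]
        linarith⟩
  have hgc : Continuous g := hgBL.2.continuous
  have hgint : Integrable g ξ :=
    Integrable.of_bound hgc.aestronglyMeasurable 1
      (Filter.Eventually.of_forall fun x => by simpa using hgBL.1 x)
  have hmeas : AEStronglyMeasurable (fun ω => g (X ω)) P := by
    by_contra hn
    have hn' : ¬ AEStronglyMeasurable (fun ω => (1 + g (X ω)) / 2) P := by
      intro hh
      refine hn ?_
      have := (hh.const_mul 2).sub (aestronglyMeasurable_const (b := (1 : ℝ)))
      refine this.congr (Filter.Eventually.of_forall fun ω => ?_)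
      simp only [Pi.sub_apply]
      ring
    have h1 := h _ hg'
    rw [integral_non_aestronglyMeasurable hn', zero_sub, abs_neg] at h1
    have h2 : (1 : ℝ) / 2 ≤ ∫ x, (1 + g x) / 2 ∂ξ := by
      have : ∫ _ : Fin k → ℝ, (1 : ℝ) / 2 ∂ξ ≤ ∫ x, (1 + g x) / 2 ∂ξ := by
        refine integral_mono (integrable_const _) ?_ fun x => ?_
        · exact ((integrable_const _).add hgint).div_const 2
        · simp only
          linarith [hg0 x]
      simpa using this
    linarith [le_abs_self (∫ x, (1 + g x) / 2 ∂ξ)]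
  have hXint : Integrable (fun ω => g (X ω)) P :=
    Integrable.of_bound hmeas 1
      (Filter.Eventually.of_forall fun ω => by simpa using hgBL.1 (X ω))
  have h1 := mul_meas_ge_le_integral_of_nonneg
    (Filter.Eventually.of_forall fun ω => hg0 (X ω)) hXint K⁻¹
  have h2 : P.real {ω | a ≤ M (X ω)} ≤ P.real {ω | K⁻¹ ≤ g (X ω)} := by
    refine measureReal_mono fun ω (hω : a ≤ _) => ?_
    have h3 : 1 ≤ (M (X ω) - (a - δ)) / δ := by
      rw [le_div_iff₀ hδ]; linarith
    have h4 : ψ ((M (X ω) - (a - δ)) / δ) = 1 := min_eq_left (h3.trans (le_max_right _ _))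
    show K⁻¹ ≤ g (X ω)
    rw [hg]
    simp only
    rw [h4, mul_one]
  have hMc : Continuous M := by
    have : LipschitzWith (Real.toNNReal L) M := LipschitzWith.of_dist_le_mul fun x y =>
      (hML x y).trans (mul_le_mul_of_nonneg_right (Real.le_coe_toNNReal L) dist_nonneg)
    exact this.continuous
  have h5 : ∫ x, g x ∂ξ ≤ K⁻¹ * ξ.real {x | a - δ ≤ M x} := by
    have hS : MeasurableSet {x | a - δ ≤ M x} :=
      measurableSet_le measurable_const hMc.measurable
    have h6 : ∫ x, g x ∂ξ ≤ ∫ x, {x | a - δ ≤ M x}.indicator (fun _ => K⁻¹) x ∂ξ := by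
      refine integral_mono hgint ((integrable_const _).indicator hS) fun x => ?_
      by_cases hx : a - δ ≤ M x
      · rw [Set.indicator_of_mem (by exact hx)]
        exact mul_le_of_le_one_right (by positivity) (hψ1 _)
      · rw [Set.indicator_of_notMem (by exact hx)]
        push Not at hx
        have h7 : ψ ((M x - (a - δ)) / δ) = 0 := by
          have : (M x - (a - δ)) / δ ≤ 0 := div_nonpos_of_nonpos_of_nonneg (by linarith) hδ.le
          simp [hψ, max_eq_left this]
        rw [hg]
        simp only
        rw [h7, mul_zero]
    rw [integral_indicator_const _ hS, smul_eq_mul] at h6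
    linarith
  have h8 := (abs_le.1 (h g hgBL)).2
  have h9 : K⁻¹ * P.real {ω | a ≤ M (X ω)} ≤ K⁻¹ * ξ.real {x | a - δ ≤ M x} + ε := by
    have := mul_le_mul_of_nonneg_left h2 (inv_pos.2 hK0).le
    linarith
  have h10 := mul_le_mul_of_nonneg_left h9 hK0.le
  rw [mul_add, mul_inv_cancel_left₀ hK0.ne', mul_inv_cancel_left₀ hK0.ne'] at h10
  exact h10

/-! ### One-sided error bound -/

lemma abs_quadForm_sub_le {κ : Type} [Fintype κ] {A B : Matrix κ κ ℝ} {e : ℝ} (he : 0 ≤ e)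
    (h : ∀ i j, |B i j - A i j| ≤ e) (x : κ → ℝ) :
    |quadForm B x - quadForm A x| ≤ e * Fintype.card κ * ∑ i, x i ^ 2 := by
  have h1 : quadForm B x - quadForm A x = ∑ i, ∑ j, x i * (B i j - A i j) * x j := by
    simp only [quadForm, ← Finset.sum_sub_distrib]
    refine Finset.sum_congr rfl fun i _ => Finset.sum_congr rfl fun j _ => by ring
  have h2 : ∑ i, ∑ j, e * ((x i ^ 2 + x j ^ 2) / 2) = e * Fintype.card κ * ∑ i, x i ^ 2 := by
    simp only [← Finset.mul_sum, ← Finset.sum_div, Finset.sum_add_distrib, Finset.sum_const,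
      Finset.card_univ, nsmul_eq_mul]
    ring
  rw [h1, ← h2]
  refine (Finset.abs_sum_le_sum_abs _ _).trans (Finset.sum_le_sum fun i _ => ?_)
  refine (Finset.abs_sum_le_sum_abs _ _).trans (Finset.sum_le_sum fun j _ => ?_)
  rw [abs_mul, abs_mul]
  have h3 : |x i| * |x j| ≤ (x i ^ 2 + x j ^ 2) / 2 := by
    nlinarith [sq_nonneg (|x i| - |x j|), sq_abs (x i), sq_abs (x j)]
  calc |x i| * |B i j - A i j| * |x j| = |B i j - A i j| * (|x i| * |x j|) := by ring
    _ ≤ e * ((x i ^ 2 + x j ^ 2) / 2) := by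
      gcongr
      exact h i j

/-- The maximum of the standardized functionals is Lipschitz for the sup norm. -/
lemma sup_linear_lipschitz {ι κ : Type} [Fintype ι] [Nonempty ι] [Fintype κ] (v : ι → κ → ℝ)
    (σ : ι → ℝ) {m b : ℝ} (hm : 0 < m) (hσ : ∀ i, m ≤ σ i) (hb : ∀ i, ∑ j, |v i j| ≤ b)
    (x y : κ → ℝ) :
    Finset.univ.sup' Finset.univ_nonempty (fun i => (∑ j, v i j * x j) / σ i)
      ≤ Finset.univ.sup' Finset.univ_nonempty (fun i => (∑ j, v i j * y j) / σ i)
        + b / m * dist x y := by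
  refine Finset.sup'_le _ _ fun i _ => ?_
  have h1 : (∑ j, v i j * y j) / σ i ≤
      Finset.univ.sup' Finset.univ_nonempty (fun i => (∑ j, v i j * y j) / σ i) :=
    Finset.le_sup' (fun i => (∑ j, v i j * y j) / σ i) (Finset.mem_univ i)
  have h2 : ∑ j, v i j * x j - ∑ j, v i j * y j ≤ b * dist x y := by
    rw [← Finset.sum_sub_distrib]
    calc ∑ j, (v i j * x j - v i j * y j) ≤ ∑ j, |v i j| * dist x y := by
          refine Finset.sum_le_sum fun j _ => ?_
          rw [← mul_sub]
          refine (le_abs_self _).trans ?_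
          rw [abs_mul]
          gcongr
          exact dist_le_pi_dist x y j
      _ = (∑ j, |v i j|) * dist x y := by rw [Finset.sum_mul]
      _ ≤ b * dist x y := by gcongr; exact hb i
  have hb0 : 0 ≤ b := (Finset.sum_nonneg fun j _ => abs_nonneg _).trans (hb i)
  have hσi : 0 < σ i := hm.trans_le (hσ i)
  have h3 : (∑ j, v i j * x j) / σ i - (∑ j, v i j * y j) / σ i ≤ b / m * dist x y := by
    rw [← sub_div, div_le_iff₀ hσi]
    have h4 : b * dist x y = b / m * dist x y * m := by field_simp
    have h5 : b / m * dist x y * m ≤ b / m * dist x y * σ i := by gcongr; exact hσ i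
    linarith
  linarith

/-- Asymptotically uniform validity of the simultaneous one-sided critical value: up to an error
vanishing uniformly over the model, with probability at least `1 - α` every functional
`v i · √n (p̂ - p)` stays below its estimated standard deviation times the critical value. -/
lemma one_sided_error (S : Setup Ω) (h3 : A3 S) (h4 : A4 S) (h5 : A5 S)
    {ι : Type} [Fintype ι] [Nonempty ι] (v : ι → Fin S.k → ℝ) (hv : ∀ i, v i ≠ 0)
    (c : ℕ → Ω → ℝ) {α : ℝ} (hα : 0 < α) (hα' : α < 1 / 2)
    (hc : ∀ n ω, ∃ ν : Measure (ι → ℝ), IsCenteredGaussian (pushCov v (S.Sig n ω)) ν ∧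
      c n ω = sInf {t : ℝ | 1 - α
        ≤ (ν {x | MaxStat (pushCov v (S.Sig n ω)) x ≤ t}).toReal}) :
    ∀ ε > (0 : ℝ), ∃ N, ∀ n ≥ N, ∀ P ∈ S.Pfam n,
      P.real {ω | ∃ i, √(pushCov v (S.Sig n ω) i i) * c n ω
        ≤ ∑ j, v i j * (√n * (S.phat n ω j - S.pmap P j))} ≤ α + ε := by
  intro ε hε
  obtain ⟨xi, hxi, h3⟩ := h3
  obtain ⟨lam, hlam, h5⟩ := h5
  have hvsq : ∀ i, 0 < ∑ s, v i s ^ 2 := by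
    intro i
    obtain ⟨s, hs⟩ := Function.ne_iff.1 (hv i)
    exact Finset.sum_pos' (fun s _ => sq_nonneg _) ⟨s, Finset.mem_univ s, by
      have : v i s ≠ 0 := hs
      positivity⟩
  -- Uniform bounds for the standard deviations and for the rows `v i`.
  obtain ⟨m, hm, hmv⟩ : ∃ m : ℝ, 0 < m ∧ ∀ i, m ≤ √(1 / lam * ∑ s, v i s ^ 2) := by
    obtain ⟨i₀, hi₀⟩ := Finite.exists_min fun i => √(1 / lam * ∑ s, v i s ^ 2)
    exact ⟨_, Real.sqrt_pos.2 (mul_pos (by positivity) (hvsq i₀)), hi₀⟩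
  obtain ⟨b, hb, hbq, hbv⟩ : ∃ b : ℝ, 0 < b ∧ (∀ i, lam * ∑ s, v i s ^ 2 ≤ b) ∧
      ∀ i, ∑ s, |v i s| ≤ b := by
    obtain ⟨i₁, hi₁⟩ := Finite.exists_max fun i => lam * ∑ s, v i s ^ 2
    obtain ⟨i₂, hi₂⟩ := Finite.exists_max fun i => ∑ s, |v i s|
    exact ⟨_, lt_max_of_lt_left (mul_pos hlam (hvsq i₁)),
      fun i => (hi₁ i).trans (le_max_left _ _), fun i => (hi₂ i).trans (le_max_right _ _)⟩
  have hcard : (0 : ℝ) < Fintype.card ι := by exact_mod_cast Fintype.card_pos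
  set q : ℝ := (Fintype.card ι : ℝ) with hq
  set C := √(q / α) with hC
  have hC0 : 0 ≤ C := Real.sqrt_nonneg _
  set δ₁ := ε / (30 * q) with hδ₁
  have hδ₁0 : 0 < δ₁ := by positivity
  set η := m * ε / (5 * q) with hη
  have hη0 : 0 < η := by positivity
  obtain ⟨δ, hδ0, hδhalf, hδη, hδC⟩ : ∃ δ : ℝ, 0 < δ ∧ δ ≤ 1 / 2 ∧
      δ ≤ ε * η ^ 2 / (10 * q * b) ∧ δ ≤ δ₁ / (C + 1) :=
    ⟨min (1 / 2) (min (ε * η ^ 2 / (10 * q * b)) (δ₁ / (C + 1))),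
      lt_min (by norm_num) (lt_min (by positivity) (by positivity)),
      min_le_left _ _, (min_le_right _ _).trans (min_le_left _ _),
      (min_le_right _ _).trans (min_le_right _ _)⟩
  set e := δ / ((S.k + 1) * lam) with he
  have he0 : 0 < e := by positivity
  set K := max 1 (b / m / δ₁) with hK
  have hK1 : 1 ≤ K := le_max_left _ _
  have hK0 : 0 < K := by linarith
  set ε' := min (1 / 4) (ε / (5 * K)) with hε'
  have hε'0 : 0 < ε' := lt_min (by norm_num) (by positivity)
  have hKε' : K * ε' ≤ ε / 5 := by
    calc K * ε' ≤ K * (ε / (5 * K)) := by gcongr; exact min_le_right _ _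
      _ = ε / 5 := by field_simp
  obtain ⟨N₁, hN₁⟩ := h3 ε' hε'0
  obtain ⟨N₂, hN₂⟩ := h4 e he0 (ε / 5) (by positivity)
  refine ⟨max N₁ N₂, fun n hn P hP => ?_⟩
  have := S.Pfam_prob n P hP
  have hBL := hN₁ n ((le_max_left _ _).trans hn) P hP
  have hBad := hN₂ n ((le_max_right _ _).trans hn) P hP
  have hξ := hxi n P hP
  have := hξ.1
  have hAlow : ∀ x, 1 / lam * ∑ i, x i ^ 2 ≤ quadForm (S.Smap P) x := fun x => (h5 n P hP x).1
  have hAup : ∀ x, quadForm (S.Smap P) x ≤ lam * ∑ i, x i ^ 2 := fun x => (h5 n P hP x).2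
  set A := S.Smap P with hA
  have hA0 : ∀ x, 0 ≤ quadForm A x := fun x =>
    (mul_nonneg (by positivity) (Finset.sum_nonneg fun i _ => sq_nonneg _)).trans (hAlow x)
  set σ : ι → ℝ := fun i => √(quadForm A (v i)) with hσdef
  have hσm : ∀ i, m ≤ σ i := fun i => (hmv i).trans (Real.sqrt_le_sqrt (hAlow _))
  have hσ0 : ∀ i, 0 < σ i := fun i => hm.trans_le (hσm i)
  set Bad : Set Ω := {ω | ∃ i j, e < |S.Sig n ω i j - A i j|} with hBadDef
  have hclose : ∀ ω ∉ Bad, ∀ x, |quadForm (S.Sig n ω) x - quadForm A x| ≤ δ * quadForm A x := by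
    intro ω hω x
    have hω' : ∀ i j, |S.Sig n ω i j - A i j| ≤ e := by
      intro i j
      by_contra hcon
      push Not at hcon
      exact hω ⟨i, j, hcon⟩
    refine (abs_quadForm_sub_le he0.le hω' x).trans ?_
    have hs0 : 0 ≤ ∑ i, x i ^ 2 := Finset.sum_nonneg fun i _ => sq_nonneg _
    have h6 : δ * (1 / lam * ∑ i, x i ^ 2) ≤ δ * quadForm A x := by gcongr; exact hAlow x
    refine le_trans ?_ h6
    rw [Fintype.card_fin, ← mul_assoc]
    refine mul_le_mul_of_nonneg_right ?_ hs0
    rw [he, div_mul_eq_mul_div, div_le_iff₀ (by positivity)]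
    have h7 : δ * (1 / lam) * ((S.k + 1) * lam) = δ * (S.k + 1) := by field_simp
    rw [h7]
    nlinarith
  have hlow : ∀ ω ∉ Bad, ∀ x, (1 - δ) * quadForm A x ≤ quadForm (S.Sig n ω) x := by
    intro ω hω x; have := (abs_le.1 (hclose ω hω x)).1; linarith
  have hup : ∀ ω ∉ Bad, ∀ x, quadForm (S.Sig n ω) x ≤ (1 + δ) * quadForm A x := by
    intro ω hω x; have := (abs_le.1 (hclose ω hω x)).2; linarith
  have hpos : ∀ ω ∉ Bad, ∀ i, 0 < pushCov v (S.Sig n ω) i i := by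
    intro ω hω i
    exact lt_of_lt_of_le (mul_pos (by linarith) (Real.sqrt_pos.1 (hσ0 i))) (hlow ω hω (v i))
  have hcrit : ∀ ω ∉ Bad, 0 ≤ c n ω ∧ c n ω ≤ C := by
    intro ω hω
    obtain ⟨ν, hν, hcν⟩ := hc n ω
    have := critical_value_bounds (hpos ω hω) hν hα hα' hcν
    exact ⟨this.1, this.2.1⟩
  by_cases hne : ∃ ω, ω ∉ Bad
  swap
  · push Not at hne
    have hBu : Bad = Set.univ := Set.eq_univ_of_forall hne
    have h6 : P.real Bad ≤ ε / 5 := hBad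
    rw [hBu, probReal_univ] at h6
    exact measureReal_le_one.trans (by linarith)
  obtain ⟨ω₁, hω₁⟩ := hne
  -- The infimum of the critical values over the good event is a deterministic threshold, and it is
  -- nearly attained at a single outcome, whose covariance estimate is close to the true one.
  set t := sInf (c n '' Badᶜ) with ht
  have hbdd : BddBelow (c n '' Badᶜ) := ⟨0, by rintro _ ⟨ω, hω, rfl⟩; exact (hcrit ω hω).1⟩
  have hnonempty : (c n '' Badᶜ).Nonempty := ⟨_, ω₁, hω₁, rfl⟩
  have htle : ∀ ω ∉ Bad, t ≤ c n ω := fun ω hω => csInf_le hbdd ⟨ω, hω, rfl⟩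
  have ht0 : 0 ≤ t := Real.sInf_nonneg (by rintro _ ⟨ω, hω, rfl⟩; exact (hcrit ω hω).1)
  have htC : t ≤ C := (htle ω₁ hω₁).trans (hcrit ω₁ hω₁).2
  obtain ⟨_, ⟨ω₀, hω₀, rfl⟩, hω₀t⟩ := exists_lt_of_csInf_lt hnonempty
    (show sInf (c n '' Badᶜ) < t + δ₁ by linarith)
  have hω₀' : ω₀ ∉ Bad := hω₀
  set M : (Fin S.k → ℝ) → ℝ := fun x =>
    Finset.univ.sup' Finset.univ_nonempty (fun i => (∑ j, v i j * x j) / σ i) with hM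
  set X : Ω → Fin S.k → ℝ := fun ω j => √n * (S.phat n ω j - S.pmap P j) with hX
  have hδCle : δ * C ≤ δ₁ := by
    rw [le_div_iff₀ (by positivity)] at hδC
    nlinarith
  have hsub : {ω | ∃ i, √(pushCov v (S.Sig n ω) i i) * c n ω
        ≤ ∑ j, v i j * (√n * (S.phat n ω j - S.pmap P j))}
      ⊆ Bad ∪ {ω | t - δ₁ ≤ M (X ω)} := by
    rintro ω ⟨i, hi⟩
    by_cases hω : ω ∈ Bad
    · exact Or.inl hω
    refine Or.inr ?_
    have h6 : (1 - δ) * σ i ≤ √(pushCov v (S.Sig n ω) i i) := by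
      apply Real.le_sqrt_of_sq_le
      have h7 := hlow ω hω (v i)
      have h8 : σ i ^ 2 = quadForm A (v i) := Real.sq_sqrt (hA0 _)
      have h9 : ((1 - δ) * σ i) ^ 2 ≤ (1 - δ) * quadForm A (v i) := by
        rw [mul_pow, h8]
        have := hA0 (v i)
        gcongr
        nlinarith
      exact h9.trans h7
    have h10 : (1 - δ) * σ i * t ≤ ∑ j, v i j * X ω j := by
      refine le_trans ?_ hi
      exact mul_le_mul h6 (htle ω hω) ht0 (Real.sqrt_nonneg _)
    have h11 : (t - δ₁) * σ i ≤ (1 - δ) * σ i * t := by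
      have : δ * t ≤ δ₁ := (mul_le_mul_of_nonneg_left htC hδ0.le).trans hδCle
      nlinarith [hσ0 i]
    have h12 : t - δ₁ ≤ (∑ j, v i j * X ω j) / σ i := by
      rw [le_div_iff₀ (hσ0 i)]
      linarith
    exact h12.trans (Finset.le_sup' (fun i => (∑ j, v i j * X ω j) / σ i) (Finset.mem_univ i))
  have hstep1 := tail_le_of_BL1 (X := X) (M := M)
    ((min_le_left _ _).trans_lt (by norm_num : (1 / 4 : ℝ) < 1 / 2)) hBL
    (sup_linear_lipschitz v σ hm hσm hbv) hδ₁0 hK1 (le_max_right _ _) (t - δ₁)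
  have hstep2 : (xi P).real {x | t - δ₁ - δ₁ ≤ M x}
      ≤ (xi P).real {x | ∃ i, (c n ω₀ - 3 * δ₁) * √(quadForm A (v i)) ≤ ∑ j, v i j * x j} := by
    refine measureReal_mono fun x hx => ?_
    change t - δ₁ - δ₁ ≤ M x at hx
    obtain ⟨i, -, hi⟩ := (Finset.le_sup'_iff _).1 hx
    refine ⟨i, ?_⟩
    rw [le_div_iff₀ (hσ0 i)] at hi
    refine le_trans ?_ hi
    exact mul_le_mul_of_nonneg_right (by linarith) (hσ0 i).le
  obtain ⟨ν, hν, hcν⟩ := hc n ω₀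
  have hcb := critical_value_bounds (hpos ω₀ hω₀') hν hα hα' hcν
  have hstep3 := gaussian_tail_transfer v hξ hν (S.Sig_symm n ω₀) hδ0 hA0
    (fun x => (mul_nonneg (by linarith) (hA0 x)).trans (hlow ω₀ hω₀' x))
    (hlow ω₀ hω₀') (hup ω₀ hω₀') hm hσm (fun i => (hAup _).trans (hbq i))
    hcb.1 hδ₁0 (show 0 < 3 * δ₁ by positivity) hη0 (hcb.2.2 _ (by linarith))
  have hsum1 : q * (2 * δ * b / η ^ 2) ≤ ε / 5 := by
    calc q * (2 * δ * b / η ^ 2)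
        ≤ q * (2 * (ε * η ^ 2 / (10 * q * b)) * b / η ^ 2) := by gcongr
      _ = ε / 5 := by field_simp; ring
  have hsum2 : q * (δ₁ + 3 * δ₁ + η / m) ≤ 2 * (ε / 5) := by
    have h6 : q * (δ₁ + 3 * δ₁ + η / m) = 2 * ε / 15 + ε / 5 := by
      rw [hδ₁, hη]; field_simp; ring
    rw [h6]; linarith
  have hBad' : P.real Bad ≤ ε / 5 := hBad
  have hfinal := (measureReal_mono (μ := P) hsub).trans (measureReal_union_le _ _)
  linarith

/-! ### Coverage of the projection interval -/

/-- Theorem 2 of Han–McCloskey: uniform asymptotic coverage of the projection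
confidence interval `(n^{-1/2}·L̂^P_{α₁}(d̂), n^{-1/2}·Û^P_{1−α₂}(d̂))`, for an
arbitrary (data-dependent) selection `d̂`.  Here `ĉ_{1−α,M}` is the `(1−α)`-quantile of
`max_i ζ_i/√((Σ̂_M)_{ii})` with `ζ ~ N(0, Σ̂_M)` computed treating `Σ̂_M` as fixed,
`L̂^P_α(d) = √n·L_{p̂}(d) − √((Σ̂_L)_{(d,ĵ_L(d)),(d,ĵ_L(d))})·ĉ_{1−α,L}` and
`Û^P_{1−α}(d) = √n·U_{p̂}(d) + √((Σ̂_U)_{(d,ĵ_U(d)),(d,ĵ_U(d))})·ĉ_{1−α,U}`. -/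
theorem stmt_5
    (Ω : Type) [MeasurableSpace Ω]
    (S : Setup Ω)
    (h3 : A3 S) (h4 : A4 S) (h5 : A5 S)
    -- the simultaneous critical values ĉ_{q,L} and ĉ_{q,U} (as functions of the level q)
    (cLq cUq : ℕ → ℝ → Ω → ℝ)
    (hcL : ∀ (n : ℕ) (ω : Ω),
      haveI := S.hJL
      ∃ ν : Measure ((Fin (S.T + 1) × Fin S.JL) → ℝ),
        IsCenteredGaussian (SigL S n ω) ν ∧
        ∀ q : ℝ, cLq n q ω
          = sInf {t : ℝ | q ≤ (ν {x | MaxStat (SigL S n ω) x ≤ t}).toReal})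
    (hcU : ∀ (n : ℕ) (ω : Ω),
      haveI := S.hJU
      ∃ ν : Measure ((Fin (S.T + 1) × Fin S.JU) → ℝ),
        IsCenteredGaussian (SigU S n ω) ν ∧
        ∀ q : ℝ, cUq n q ω
          = sInf {t : ℝ | q ≤ (ν {x | MaxStat (SigU S n ω) x ≤ t}).toReal})
    -- an arbitrary data-dependent selection
    (dhat : ℕ → Ω → Fin (S.T + 1))
    (α₁ α₂ : ℝ) (hα₁ : 0 < α₁) (hα₁' : α₁ < 1 / 2) (hα₂ : 0 < α₂) (hα₂' : α₂ < 1 / 2) :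
    -- liminf_n inf_{P ∈ 𝒫_n} P( [L(d̂),U(d̂)] ⊆ (n^{-1/2} L̂^P_{α₁}, n^{-1/2} Û^P_{1−α₂}) )
    --   ≥ 1 − α₁ − α₂
    ∀ ε > (0 : ℝ), ∃ N, ∀ n ≥ N, ∀ P ∈ S.Pfam n,
      1 - α₁ - α₂ - ε
        ≤ (P {ω |
            (Real.sqrt n * Lb S (S.phat n ω) (dhat n ω)
              - Real.sqrt (SigL S n ω (dhat n ω, S.jL n (dhat n ω) ω)
                  (dhat n ω, S.jL n (dhat n ω) ω)) * cLq n (1 - α₁) ω) / Real.sqrt n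
              < Lb S (S.pmap P) (dhat n ω)
            ∧ Ub S (S.pmap P) (dhat n ω)
              < (Real.sqrt n * Ub S (S.phat n ω) (dhat n ω)
                  + Real.sqrt (SigU S n ω (dhat n ω, S.jU n (dhat n ω) ω)
                      (dhat n ω, S.jU n (dhat n ω) ω)) * cUq n (1 - α₂) ω)
                / Real.sqrt n}).toReal := by
  have := S.hJL
  have := S.hJU
  intro ε hε
  -- The upper bound is the lower-bound problem for the rows `-u`, which have the same covariance.
  have hneg : ∀ n ω, pushCov (fun (a : Fin (S.T + 1) × Fin S.JU) s => -S.uvec a.1 a.2 s)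
      (S.Sig n ω) = SigU S n ω := by
    intro n ω
    ext a b
    simp [pushCov, SigU]
  obtain ⟨N₁, hN₁⟩ := one_sided_error S h3 h4 h5
    (fun (a : Fin (S.T + 1) × Fin S.JL) => S.lvec a.1 a.2) (fun a => S.lvec_ne _ _)
    (fun n => cLq n (1 - α₁)) hα₁ hα₁'
    (fun n ω => by
      obtain ⟨ν, hν, hcν⟩ := hcL n ω
      exact ⟨ν, hν, hcν _⟩) (ε / 2) (by linarith)
  obtain ⟨N₂, hN₂⟩ := one_sided_error S h3 h4 h5
    (fun (a : Fin (S.T + 1) × Fin S.JU) s => -S.uvec a.1 a.2 s)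
    (fun a h => S.uvec_ne a.1 a.2 (by
      funext s
      have := congrFun h s
      simpa using this))
    (fun n => cUq n (1 - α₂)) hα₂ hα₂'
    (fun n ω => by
      obtain ⟨ν, hν, hcν⟩ := hcU n ω
      rw [hneg]
      exact ⟨ν, hν, hcν _⟩) (ε / 2) (by linarith)
  refine ⟨max 1 (max N₁ N₂), fun n hn P hP => ?_⟩
  have hn1 : 1 ≤ n := (le_max_left _ _).trans hn
  have := S.Pfam_prob n P hP
  have hL := hN₁ n ((le_max_left _ _).trans ((le_max_right _ _).trans hn)) P hP
  have hU := hN₂ n ((le_max_right _ _).trans ((le_max_right _ _).trans hn)) P hP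
  simp only [hneg] at hU
  have hsn : 0 < √(n : ℝ) := Real.sqrt_pos.2 (by exact_mod_cast hn1)
  set EL : Set Ω := {ω | ∃ i : Fin (S.T + 1) × Fin S.JL,
    √(pushCov (fun (a : Fin (S.T + 1) × Fin S.JL) => S.lvec a.1 a.2) (S.Sig n ω) i i)
      * cLq n (1 - α₁) ω ≤ ∑ j, S.lvec i.1 i.2 j * (√n * (S.phat n ω j - S.pmap P j))} with hEL
  set EU : Set Ω := {ω | ∃ i : Fin (S.T + 1) × Fin S.JU, √(SigU S n ω i i)
      * cUq n (1 - α₂) ω ≤ ∑ j, -S.uvec i.1 i.2 j * (√n * (S.phat n ω j - S.pmap P j))} with hEU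
  set E : Set Ω := {ω | _ ∧ _} with hE
  change 1 - α₁ - α₂ - ε ≤ P.real E
  have hcover : Set.univ ⊆ E ∪ (EL ∪ EU) := by
    intro ω _
    by_contra hω
    simp only [Set.mem_union, not_or] at hω
    obtain ⟨hωE, hωL, hωU⟩ := hω
    refine hωE ?_
    constructor
    · rw [div_lt_iff₀ hsn]
      set d := dhat n ω
      set j := S.jL n d ω
      have h1 : Lb S (S.phat n ω) d = S.ltil d j + ∑ i, S.lvec d j i * S.phat n ω i :=
        le_antisymm (Finset.sup'_le _ _ fun j' _ => S.jL_attains n d ω j')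
          (Finset.le_sup' (fun j => S.ltil d j + ∑ i, S.lvec d j i * S.phat n ω i)
            (Finset.mem_univ j))
      have h2 : S.ltil d j + ∑ i, S.lvec d j i * S.pmap P i ≤ Lb S (S.pmap P) d :=
        Finset.le_sup' (fun j => S.ltil d j + ∑ i, S.lvec d j i * S.pmap P i)
          (Finset.mem_univ j)
      have h3 : ∑ i, S.lvec d j i * (√n * (S.phat n ω i - S.pmap P i))
          < √(SigL S n ω (d, j) (d, j)) * cLq n (1 - α₁) ω := by
        by_contra hcon
        exact hωL ⟨(d, j), not_lt.1 hcon⟩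
      have h4 : ∑ i, S.lvec d j i * (√n * (S.phat n ω i - S.pmap P i))
          = √n * (∑ i, S.lvec d j i * S.phat n ω i - ∑ i, S.lvec d j i * S.pmap P i) := by
        rw [← Finset.sum_sub_distrib, Finset.mul_sum]
        exact Finset.sum_congr rfl fun i _ => by ring
      have h5 := mul_le_mul_of_nonneg_left h2 hsn.le
      rw [h1]
      linarith
    · rw [lt_div_iff₀ hsn]
      set d := dhat n ω
      set j := S.jU n d ω
      have h1 : Ub S (S.phat n ω) d = S.util d j + ∑ i, S.uvec d j i * S.phat n ω i :=
        le_antisymm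
          (Finset.inf'_le (fun j => S.util d j + ∑ i, S.uvec d j i * S.phat n ω i)
            (Finset.mem_univ j))
          (Finset.le_inf' _ _ fun j' _ => S.jU_attains n d ω j')
      have h2 : Ub S (S.pmap P) d ≤ S.util d j + ∑ i, S.uvec d j i * S.pmap P i :=
        Finset.inf'_le (fun j => S.util d j + ∑ i, S.uvec d j i * S.pmap P i)
          (Finset.mem_univ j)
      have h3 : ∑ i, -S.uvec d j i * (√n * (S.phat n ω i - S.pmap P i))
          < √(SigU S n ω (d, j) (d, j)) * cUq n (1 - α₂) ω := by
        by_contra hcon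
        exact hωU ⟨(d, j), not_lt.1 hcon⟩
      have h4 : ∑ i, -S.uvec d j i * (√n * (S.phat n ω i - S.pmap P i))
          = √n * (∑ i, S.uvec d j i * S.pmap P i - ∑ i, S.uvec d j i * S.phat n ω i) := by
        rw [← Finset.sum_sub_distrib, Finset.mul_sum]
        exact Finset.sum_congr rfl fun i _ => by ring
      have h5 := mul_le_mul_of_nonneg_left h2 hsn.le
      rw [h1]
      linarith
  have h1 := measureReal_mono (μ := P) hcover
  rw [probReal_univ] at h1
  have h2 := measureReal_union_le (μ := P) E (EL ∪ EU)
  have h3 := measureReal_union_le (μ := P) EL EU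
  linarith

end
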